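/- arXiv:1609.09378 — 2 statements merged into one kernel-verified Lean document; each statement's English description precedes it below -/
import Mathlib

section
/- Let g : V → (−∞,+∞] be a weakly lower semicontinuous function on a separable real Hilbert space V, not identically +∞, such that its biconjugate g** is proper and coercive (all sublevel sets of g** are bounded). Then for every extremal point x of g** — that is, every x ∈ dom(g**) such that g** is not affine on any relatively open segment containing x — one has g(x) = g**(x). Equivalently, the epigraph of the function equal to g** at extremal points of g** and +∞ elsewhere is contained in the epigraph of g. -/
open scoped InnerProductSpace RealInnerProductSpace ENNReal Topology
open Filter

noncomputable section

/-- The Legendre transform (Fenchel conjugate) of an extended-real-valued function. -/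
def legendre {V : Type*} [NormedAddCommGroup V] [InnerProductSpace ℝ V]
    (g : V → EReal) (y : V) : EReal :=
  ⨆ x : V, (((⟪x, y⟫_ℝ : ℝ) : EReal) - g x)

/-!
By Hahn-Banach, the epigraph of `g**` is the weakly closed convex hull of the epigraph of `g`, and
if `g**` is affine along no line through `x`, then `(x, g**(x))` is an extreme point of it. Milman's
theorem puts the extreme points of a compact closed convex hull of a set in the closure of the set.
An epigraph is not compact, but its part up to a height `r > g**(x)` is, by coercivity and weak
compactness of balls, and this is enough: the slices of that part by open half-spaces form a
neighbourhood basis at its extreme point `(x, g**(x))`, and those that stay below the height `r` are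
slices of the whole epigraph. Hence `(x, g**(x))` lies in the epigraph of `g`, which is weakly
closed.
-/

section Milman

variable {E : Type*} [AddCommGroup E] [Module ℝ E] [TopologicalSpace E]

theorem le_of_mem_closedConvexHull {s : Set E} {l : E →L[ℝ] ℝ} {d : ℝ} (hs : ∀ q ∈ s, l q ≤ d)
    {p : E} (hp : p ∈ closedConvexHull ℝ s) : l p ≤ d :=
  closedConvexHull_min (t := {q | l q ≤ d}) hs (convex_halfSpace_le l.toLinearMap.isLinear d)
    (isClosed_le l.continuous continuous_const) hp

variable [IsTopologicalAddGroup E] [ContinuousSMul ℝ E]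

theorem isCompact_convexJoin {s t : Set E} (hs : IsCompact s) (ht : IsCompact t) :
    IsCompact (convexJoin ℝ s t) := by
  have himage : convexJoin ℝ s t =
      (fun q : ℝ × E × E => (1 - q.1) • q.2.1 + q.1 • q.2.2) ''
        (Set.Icc (0 : ℝ) 1 ×ˢ s ×ˢ t) := by
    ext z
    simp only [mem_convexJoin, segment_eq_image, Set.mem_image, Set.mem_prod, Prod.exists]
    constructor
    · rintro ⟨a, ha, b, hb, θ, hθ, rfl⟩
      exact ⟨θ, a, b, ⟨hθ, ha, hb⟩, rfl⟩
    · rintro ⟨θ, a, b, ⟨hθ, ha, hb⟩, rfl⟩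
      exact ⟨a, ha, b, hb, θ, hθ, rfl⟩
  rw [himage]
  exact (isCompact_Icc.prod (hs.prod ht)).image (by fun_prop)

theorem notMem_closedConvexHull_union_of_mem_extremePoints [T2Space E] {K s t : Set E}
    (hK : IsCompact K) (hKc : Convex ℝ K) (hs : s ⊆ K) (ht : t ⊆ K) {p : E}
    (hp : p ∈ K.extremePoints ℝ) (hps : p ∉ closedConvexHull ℝ s)
    (hpt : p ∉ closedConvexHull ℝ t) : p ∉ closedConvexHull ℝ (s ∪ t) := by
  obtain rfl | hsne := s.eq_empty_or_nonempty
  · rwa [Set.empty_union]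
  obtain rfl | htne := t.eq_empty_or_nonempty
  · rwa [Set.union_empty]
  have hsK := closedConvexHull_min hs hKc hK.isClosed
  have htK := closedConvexHull_min ht hKc hK.isClosed
  have hjoin : closedConvexHull ℝ (s ∪ t) ⊆
      convexJoin ℝ (closedConvexHull ℝ s) (closedConvexHull ℝ t) :=
    closedConvexHull_min
      (Set.union_subset
        (subset_closedConvexHull.trans
          (subset_convexJoin_left (htne.mono subset_closedConvexHull)))
        (subset_closedConvexHull.trans
          (subset_convexJoin_right (hsne.mono subset_closedConvexHull))))
      (convex_closedConvexHull.convexJoin convex_closedConvexHull)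
      (isCompact_convexJoin (hK.of_isClosed_subset isClosed_closedConvexHull hsK)
        (hK.of_isClosed_subset isClosed_closedConvexHull htK)).isClosed
  intro hpst
  obtain ⟨a, ha, b, hb, hab⟩ := mem_convexJoin.1 (hjoin hpst)
  rcases (mem_extremePoints_iff_forall_segment.1 hp).2 a (hsK ha) b (htK hb) hab with rfl | rfl
  · exact hps ha
  · exact hpt hb

variable [T2Space E] [LocallyConvexSpace ℝ E]

theorem notMem_closedConvexHull_of_mem_extremePoints {K s : Set E} (hK : IsCompact K)
    (hKc : Convex ℝ K) (hs : IsCompact s) (hsK : s ⊆ K) {p : E}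
    (hp : p ∈ K.extremePoints ℝ) (hps : p ∉ s) : p ∉ closedConvexHull ℝ s := by
  rw [← Set.inter_eq_left.2 hsK]
  refine hs.induction_on (p := fun t => p ∉ closedConvexHull ℝ (t ∩ K)) ?empty ?mono ?union ?nhds
  case empty =>
    exact fun h => closedConvexHull_min (Set.empty_inter K).subset convex_empty isClosed_empty h
  case mono =>
    exact fun t u htu hu ht =>
      hu ((closedConvexHull ℝ).monotone (Set.inter_subset_inter_left K htu) ht)
  case union =>
    intro t u ht hu
    rw [Set.union_inter_distrib_right]
    exact notMem_closedConvexHull_union_of_mem_extremePoints hK hKc Set.inter_subset_right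
      Set.inter_subset_right hp ht hu
  case nhds =>
    intro z hz
    obtain ⟨l, hl⟩ := geometric_hahn_banach_point_point (ne_of_mem_of_not_mem hz hps)
    obtain ⟨c, hzc, hcp⟩ := exists_between hl
    refine ⟨{w | l w ≤ c}, mem_nhdsWithin_of_mem_nhds ?_, fun hpc =>
      hcp.not_ge (le_of_mem_closedConvexHull (fun w hw => hw.1) hpc)⟩
    filter_upwards [(isOpen_lt l.continuous continuous_const).mem_nhds hzc] with w hw
    exact le_of_lt hw

theorem exists_slice_subset_of_mem_extremePoints {K U : Set E} (hKc : Convex ℝ K)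
    (τ : E →L[ℝ] ℝ) {r : ℝ} (hcomp : IsCompact (K ∩ {q | τ q ≤ r})) {p : E}
    (hp : p ∈ K.extremePoints ℝ) (hpr : τ p < r) (hU : IsOpen U) (hpU : p ∈ U) :
    ∃ (l : E →L[ℝ] ℝ) (d : ℝ), d < l p ∧ ∀ q ∈ K, d < l q → q ∈ U := by
  have hW : IsOpen (U ∩ {q | τ q < r}) := hU.inter (isOpen_lt τ.continuous continuous_const)
  have hpK : p ∈ (K ∩ {q | τ q ≤ r}).extremePoints ℝ :=
    inter_extremePoints_subset_extremePoints_of_subset Set.inter_subset_left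
      ⟨⟨hp.1, hpr.le⟩, hp⟩
  have hphull := notMem_closedConvexHull_of_mem_extremePoints hcomp
    (hKc.inter (convex_halfSpace_le τ.toLinearMap.isLinear r)) (hcomp.diff hW) Set.sdiff_subset
    hpK (fun h => h.2 ⟨hpU, hpr⟩)
  obtain ⟨l, d, hl, hd⟩ :=
    geometric_hahn_banach_closed_point convex_closedConvexHull isClosed_closedConvexHull hphull
  have hslice : ∀ q ∈ K, τ q ≤ r → d < l q → q ∈ U ∩ {q | τ q < r} := fun q hqK hqr hdq => by
    by_contra hqW
    exact (hl q (subset_closedConvexHull ⟨⟨hqK, hqr⟩, hqW⟩)).not_gt hdq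
  refine ⟨l, d, hd, fun q hqK hdq => ?_⟩
  rcases le_or_gt (τ q) r with hqr | hqr
  · exact (hslice q hqK hqr hdq).1
  -- The slice is connected, so if it left `{τ ≤ r}` it would meet the level set `{τ = r}`.
  obtain ⟨z, ⟨hzK, hdz⟩, hzr⟩ :=
    (hKc.inter (convex_halfSpace_gt l.toLinearMap.isLinear d)).isPreconnected.intermediate_value
      ⟨hp.1, hd⟩ ⟨hqK, hdq⟩ τ.continuous.continuousOn ⟨hpr.le, hqr.le⟩
  exact absurd hzr (hslice z hzK hzr.le hdz).2.ne

theorem mem_closure_of_mem_extremePoints_closedConvexHull {s : Set E} (τ : E →L[ℝ] ℝ) {r : ℝ}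
    (hcomp : IsCompact (closedConvexHull ℝ s ∩ {q | τ q ≤ r})) {p : E}
    (hp : p ∈ (closedConvexHull ℝ s).extremePoints ℝ) (hpr : τ p < r) : p ∈ closure s := by
  by_contra hps
  obtain ⟨l, d, hd, hslice⟩ := exists_slice_subset_of_mem_extremePoints convex_closedConvexHull τ
    hcomp hp hpr isClosed_closure.isOpen_compl hps
  have hsl : ∀ q ∈ s, l q ≤ d := fun q hq => not_lt.1 fun hdq =>
    hslice q (subset_closedConvexHull hq) hdq (subset_closure hq)
  exact hd.not_ge (le_of_mem_closedConvexHull hsl hp.1)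

end Milman

section Epigraph

/-- The epigraph of an extended-real-valued function, as a set of pairs with real height. -/
def epigraph {E : Type*} (f : E → EReal) : Set (E × ℝ) :=
  {q | f q.1 ≤ q.2}

theorem isClosed_epigraph {E : Type*} [TopologicalSpace E] {f : E → EReal}
    (hf : LowerSemicontinuous f) : IsClosed (epigraph f) :=
  hf.isClosed_epigraph.preimage
    (continuous_fst.prodMk (continuous_coe_real_ereal.comp continuous_snd))

variable {E : Type*} [AddCommGroup E] [Module ℝ E]

/-- `AffineAlong f x ν` says that `f` is finite and affine on an open segment around `x` in the
direction `ν`. -/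
def AffineAlong (f : E → EReal) (x ν : E) : Prop :=
  ∃ a b t₀ : ℝ, 0 < t₀ ∧ ∀ t ∈ Set.Ioo (-t₀) t₀, f (x + t • ν) = ((a * t + b : ℝ) : EReal)

theorem AffineAlong.smul {f : E → EReal} {x ν : E} (h : AffineAlong f x ν) {c : ℝ} (hc : 0 < c) :
    AffineAlong f x (c • ν) := by
  obtain ⟨a, b, t₀, ht₀, hf⟩ := h
  refine ⟨a * c, b, t₀ / c, by positivity, fun t ⟨hlo, hhi⟩ => ?_⟩
  rw [neg_lt, lt_div_iff₀ hc] at hlo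
  rw [lt_div_iff₀ hc] at hhi
  rw [smul_smul, hf (t * c) ⟨by linarith, hhi⟩, mul_assoc, mul_comm c]

theorem eq_affine_of_le_affine {f : E → EReal} (hf : Convex ℝ (epigraph f)) {x ν : E}
    {a m t₀ : ℝ} (hm : f x = m)
    (hle : ∀ t ∈ Set.Ioo (-t₀) t₀, f (x + t • ν) ≤ ((a * t + m : ℝ) : EReal)) :
    ∀ t ∈ Set.Ioo (-t₀) t₀, f (x + t • ν) = ((a * t + m : ℝ) : EReal) := by
  intro t ht
  refine (hle t ht).antisymm (le_of_not_gt fun hlt => ?_)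
  obtain ⟨c, hfc, hca⟩ := EReal.lt_iff_exists_real_btwn.1 hlt
  have hright : (x + t • ν, c) ∈ epigraph f := hfc.le
  have hleft : (x + (-t) • ν, a * (-t) + m) ∈ epigraph f :=
    hle (-t) ⟨by linarith [ht.2], by linarith [ht.1]⟩
  have hmid := hf hright hleft (a := 1 / 2) (b := 1 / 2) (by norm_num) (by norm_num) (by norm_num)
  have hx : (1 / 2 : ℝ) • (x + t • ν) + (1 / 2 : ℝ) • (x + (-t) • ν) = x := by module
  simp only [epigraph, Set.mem_ofPred_eq, Prod.fst_add, Prod.snd_add, Prod.smul_fst,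
    Prod.smul_snd, hx, hm, smul_eq_mul, EReal.coe_le_coe_iff] at hmid
  linarith [EReal.coe_lt_coe_iff.1 hca]

theorem affineAlong_sub_of_mem_openSegment {f : E → EReal} (hf : Convex ℝ (epigraph f)) {x : E}
    {m : ℝ} (hm : f x = m) {p q : E × ℝ} (hp : p ∈ epigraph f) (hq : q ∈ epigraph f)
    (hx : (x, m) ∈ openSegment ℝ p q) : AffineAlong f x (q.1 - p.1) := by
  obtain ⟨a, b, ha, hb, hab, hcombo⟩ := hx
  obtain ⟨hx, hm'⟩ := Prod.mk.inj hcombo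
  simp only [Prod.smul_fst, Prod.smul_snd, smul_eq_mul] at hx hm'
  refine ⟨q.2 - p.2, m, min a b, lt_min ha hb, eq_affine_of_le_affine hf hm ?_⟩
  rintro t ⟨hlo, hhi⟩
  have hmem := hf hp hq (a := a - t) (b := b + t) (by linarith [min_le_left a b])
    (by linarith [min_le_right a b]) (by linarith)
  have hpoint : (a - t) • p + (b + t) • q = (x + t • (q.1 - p.1), (q.2 - p.2) * t + m) := by
    ext
    · simp only [Prod.fst_add, Prod.smul_fst, ← hx]
      module
    · simp only [Prod.snd_add, Prod.smul_snd, smul_eq_mul, ← hm']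
      ring
  rwa [hpoint] at hmem

theorem mem_extremePoints_epigraph {f : E → EReal} (hf : Convex ℝ (epigraph f)) {x : E} {m : ℝ}
    (hm : f x = m) (hx : ∀ ν ≠ 0, ¬ AffineAlong f x ν) :
    (x, m) ∈ (epigraph f).extremePoints ℝ := by
  refine mem_extremePoints_iff_left.2 ⟨hm.le, fun p hp q hq hseg => ?_⟩
  have hpq : q.1 = p.1 := by
    by_contra hne
    exact hx _ (sub_ne_zero.2 hne) (affineAlong_sub_of_mem_openSegment hf hm hp hq hseg)
  obtain ⟨a, b, ha, hb, hab, hcombo⟩ := hseg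
  obtain ⟨hpx, hheight⟩ := Prod.mk.inj hcombo
  simp only [Prod.smul_fst, Prod.smul_snd, smul_eq_mul, hpq, ← add_smul, hab, one_smul]
    at hpx hheight
  simp only [epigraph, Set.mem_ofPred_eq, hpq, hpx, hm, EReal.coe_le_coe_iff] at hp hq
  obtain rfl : b = 1 - a := by linarith
  refine Prod.ext hpx (le_antisymm (le_of_not_gt fun hlt => ?_) hp)
  linarith [mul_lt_mul_of_pos_left hlt ha, mul_le_mul_of_nonneg_left hq hb.le]

end Epigraph

section AffineEnvelope

variable {E : Type*} [AddCommGroup E] [Module ℝ E] [TopologicalSpace E]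

/-- The supremum of the continuous affine minorants of `f`. On a locally convex space it is the
abstract counterpart of the biconjugate; it is `⊥` if `f` has no continuous affine minorant. -/
def affineEnvelope (f : E → EReal) (x : E) : EReal :=
  ⨆ A : {A : E →ᴬ[ℝ] ℝ // ∀ z, (A z : EReal) ≤ f z}, ((A.1 x : ℝ) : EReal)

theorem affineEnvelope_le (f : E → EReal) (x : E) : affineEnvelope f x ≤ f x :=
  iSup_le fun A => A.2 x

theorem affineEnvelope_le_coe_iff {f : E → EReal} {x : E} {t : ℝ} :
    affineEnvelope f x ≤ t ↔ ∀ A : E →ᴬ[ℝ] ℝ, (∀ z, (A z : EReal) ≤ f z) → A x ≤ t := by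
  simp only [affineEnvelope, iSup_le_iff, EReal.coe_le_coe_iff, Subtype.forall]

theorem exists_affine_le_of_affineEnvelope_ne_bot {f : E → EReal} {x : E}
    (hx : affineEnvelope f x ≠ ⊥) : ∃ A : E →ᴬ[ℝ] ℝ, ∀ z, (A z : EReal) ≤ f z := by
  by_contra! hno
  exact hx (iSup_eq_bot.2 fun A => absurd A.2 (by push Not; exact hno A))

theorem exists_le_coe_of_affineEnvelope_le_coe {f : E → EReal} {x : E} {t : ℝ}
    (hx : affineEnvelope f x ≤ t) : ∃ (z : E) (u : ℝ), f z ≤ u := by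
  by_contra! hno
  have hconst := affineEnvelope_le_coe_iff.1 hx (ContinuousAffineMap.const ℝ E (t + 1))
    fun z => (hno z (t + 1)).le
  simp only [ContinuousAffineMap.coe_const, Function.const_apply] at hconst
  linarith

theorem lowerSemicontinuous_affineEnvelope (f : E → EReal) :
    LowerSemicontinuous (affineEnvelope f) :=
  lowerSemicontinuous_iSup fun A =>
    (continuous_coe_real_ereal.comp A.1.continuous).lowerSemicontinuous

theorem convex_epigraph_affineEnvelope (f : E → EReal) :
    Convex ℝ (epigraph (affineEnvelope f)) := by
  intro p hp q hq a b ha hb hab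
  refine affineEnvelope_le_coe_iff.2 fun A hA => ?_
  have hAp := mul_le_mul_of_nonneg_left (affineEnvelope_le_coe_iff.1 hp A hA) ha
  have hAq := mul_le_mul_of_nonneg_left (affineEnvelope_le_coe_iff.1 hq A hA) hb
  have hAcombo : A (a • p.1 + b • q.1) = a * A p.1 + b * A q.1 :=
    Convex.combo_affine_apply (f := (A : E →ᵃ[ℝ] ℝ)) hab
  simp only [Prod.fst_add, Prod.smul_fst, Prod.snd_add, Prod.smul_snd, smul_eq_mul]
  linarith

theorem isCompact_epigraph_affineEnvelope_inter {f : E → EReal} {A : E →ᴬ[ℝ] ℝ}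
    (hA : ∀ z, (A z : EReal) ≤ f z) {r : ℝ} (hcomp : IsCompact {x | affineEnvelope f x ≤ r}) :
    IsCompact (epigraph (affineEnvelope f) ∩ {q | q.2 ≤ r}) := by
  obtain ⟨c, hc⟩ := hcomp.bddBelow_image A.continuous.continuousOn
  refine (hcomp.prod (isCompact_Icc (a := c) (b := r))).of_isClosed_subset
    ((isClosed_epigraph (lowerSemicontinuous_affineEnvelope f)).inter
      (isClosed_le continuous_snd continuous_const)) ?_
  rintro ⟨x, t⟩ ⟨hxt, htr⟩
  have hxr : affineEnvelope f x ≤ r := le_trans hxt (EReal.coe_le_coe_iff.2 htr)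
  exact ⟨hxr, (hc ⟨x, hxr, rfl⟩).trans (affineEnvelope_le_coe_iff.1 hxt A hA), htr⟩

theorem nonpos_of_forall_mul_le {a b : ℝ} (h : ∀ μ : ℝ, 0 ≤ μ → μ * a ≤ b) : a ≤ 0 := by
  by_contra! ha
  have hb := h ((|b| + 1) / a) (by positivity)
  rw [div_mul_cancel₀ _ ha.ne'] at hb
  linarith [le_abs_self b]

/-- Adding a large multiple of the half-space inequality to an affine minorant `A` gives an affine
minorant even if the half-space is vertical (`s = 0`). -/
theorem affineEnvelope_halfSpace {f : E → EReal} {A : E →ᴬ[ℝ] ℝ}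
    (hA : ∀ z, (A z : EReal) ≤ f z) {l : E →ᴬ[ℝ] ℝ} {s : ℝ}
    (hepi : ∀ q ∈ epigraph f, l q.1 + s * q.2 ≤ 0) :
    ∀ q ∈ epigraph (affineEnvelope f), l q.1 + s * q.2 ≤ 0 := by
  rintro ⟨x, t⟩ hxt
  have hs : s ≤ 0 := by
    obtain ⟨z, u, hzu⟩ := exists_le_coe_of_affineEnvelope_le_coe hxt
    refine nonpos_of_forall_mul_le (b := -(l z + s * u)) fun μ hμ => ?_
    have hup : (z, u + μ) ∈ epigraph f :=
      hzu.trans (EReal.coe_le_coe_iff.2 (le_add_of_nonneg_right hμ))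
    linarith [hepi _ hup]
  refine nonpos_of_forall_mul_le (b := t - A x) fun μ hμ => ?_
  have hκ : 0 < 1 - μ * s := by nlinarith
  have hminorant : ∀ z, ((((1 - μ * s)⁻¹ • (A + μ • l)) z : ℝ) : EReal) ≤ f z := by
    refine fun z => EReal.le_of_forall_lt_iff_le.1 fun u hu => EReal.coe_le_coe_iff.2 ?_
    have hAu : A z ≤ u := EReal.coe_le_coe_iff.1 ((hA z).trans hu.le)
    have hlu := mul_le_mul_of_nonneg_left (hepi (z, u) hu.le) hμ
    simp only [ContinuousAffineMap.smul_apply, ContinuousAffineMap.add_apply, smul_eq_mul]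
    rw [inv_mul_le_iff₀ hκ]
    linarith
  have hx := affineEnvelope_le_coe_iff.1 hxt _ hminorant
  simp only [ContinuousAffineMap.smul_apply, ContinuousAffineMap.add_apply, smul_eq_mul] at hx
  rw [inv_mul_le_iff₀ hκ] at hx
  linarith

variable [IsTopologicalAddGroup E] [ContinuousSMul ℝ E] [LocallyConvexSpace ℝ E]

theorem epigraph_affineEnvelope {f : E → EReal} {A : E →ᴬ[ℝ] ℝ}
    (hA : ∀ z, (A z : EReal) ≤ f z) :
    epigraph (affineEnvelope f) = closedConvexHull ℝ (epigraph f) := by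
  refine subset_antisymm (fun p hp => ?_) (closedConvexHull_min
    (fun q hq => (affineEnvelope_le f q.1).trans hq) (convex_epigraph_affineEnvelope f)
    (isClosed_epigraph (lowerSemicontinuous_affineEnvelope f)))
  by_contra hphull
  obtain ⟨l, d, hl, hd⟩ :=
    geometric_hahn_banach_closed_point convex_closedConvexHull isClosed_closedConvexHull hphull
  let B : E →ᴬ[ℝ] ℝ := (l.comp (ContinuousLinearMap.inl ℝ E ℝ)).toContinuousAffineMap -
    ContinuousAffineMap.const ℝ E d
  have hB : ∀ q : E × ℝ, B q.1 + l (0, 1) * q.2 = l q - d := fun q => by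
    have hq : q = (q.1, (0 : ℝ)) + q.2 • ((0 : E), (1 : ℝ)) := by simp
    conv_rhs => rw [hq, map_add, map_smul, smul_eq_mul]
    simp only [B, ContinuousAffineMap.sub_apply, ContinuousLinearMap.coe_toContinuousAffineMap,
      ContinuousLinearMap.comp_apply, ContinuousLinearMap.inl_apply,
      ContinuousAffineMap.coe_const, Function.const_apply]
    ring
  have hpB := affineEnvelope_halfSpace hA (l := B) (s := l (0, 1)) (fun q hq => by
    linarith [hB q, hl q (subset_closedConvexHull hq)]) p hp
  linarith [hB p]

theorem le_of_mem_extremePoints_epigraph_affineEnvelope [T2Space E] {f : E → EReal}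
    (hf : LowerSemicontinuous f) {x : E} {m r : ℝ} (hbot : affineEnvelope f x ≠ ⊥)
    (hmr : m < r) (hcomp : IsCompact {z | affineEnvelope f z ≤ r})
    (hx : (x, m) ∈ (epigraph (affineEnvelope f)).extremePoints ℝ) : f x ≤ m := by
  obtain ⟨A, hA⟩ := exists_affine_le_of_affineEnvelope_ne_bot hbot
  have hslab := isCompact_epigraph_affineEnvelope_inter hA hcomp
  rw [epigraph_affineEnvelope hA] at hslab hx
  have hclosure := mem_closure_of_mem_extremePoints_closedConvexHull
    (ContinuousLinearMap.snd ℝ E ℝ) hslab hx hmr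
  rwa [(isClosed_epigraph hf).closure_eq] at hclosure

theorem affineEnvelope_eq_of_not_affineAlong [T2Space E] {f : E → EReal}
    (hf : LowerSemicontinuous f) {x : E} {r : ℝ} (hbot : affineEnvelope f x ≠ ⊥)
    (hr : affineEnvelope f x < r) (hcomp : IsCompact {z | affineEnvelope f z ≤ r})
    (hx : ∀ ν ≠ 0, ¬ AffineAlong (affineEnvelope f) x ν) : f x = affineEnvelope f x := by
  have hm := EReal.coe_toReal hr.ne_top hbot
  refine le_antisymm ?_ (affineEnvelope_le f x)
  rw [← hm] at hr ⊢
  exact le_of_mem_extremePoints_epigraph_affineEnvelope hf hbot (EReal.coe_lt_coe_iff.1 hr) hcomp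
    (mem_extremePoints_epigraph (convex_epigraph_affineEnvelope f) hm.symm hx)

end AffineEnvelope

section Biconjugate

variable {V : Type*} [NormedAddCommGroup V] [InnerProductSpace ℝ V]

theorem ereal_coe_sub_le_coe_iff (a t : ℝ) (b : EReal) :
    (a : EReal) - b ≤ t ↔ ((a - t : ℝ) : EReal) ≤ b := by
  induction b with
  | bot => simp [-EReal.coe_sub]
  | top => simp
  | coe b =>
    norm_cast
    constructor <;> intro h <;> linarith

theorem legendre_le_coe_iff {g : V → EReal} {y : V} {t : ℝ} :
    legendre g y ≤ t ↔ ∀ z, ((⟪z, y⟫_ℝ - t : ℝ) : EReal) ≤ g z := by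
  simp only [legendre, iSup_le_iff, ereal_coe_sub_le_coe_iff]

theorem legendre_legendre_le_coe_iff {g : V → EReal} {x : V} {t : ℝ} :
    legendre (legendre g) x ≤ t ↔
      ∀ (y : V) (r : ℝ), (∀ z, ((⟪z, y⟫_ℝ - r : ℝ) : EReal) ≤ g z) → ⟪x, y⟫_ℝ - r ≤ t := by
  simp only [← legendre_le_coe_iff]
  rw [legendre_le_coe_iff]
  refine forall_congr' fun y => ⟨fun h r hr => ?_, fun h => ?_⟩
  · rw [real_inner_comm]
    linarith [EReal.coe_le_coe_iff.1 (h.trans hr)]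
  · refine EReal.le_of_forall_lt_iff_le.1 fun r hr => EReal.coe_le_coe_iff.2 ?_
    rw [real_inner_comm]
    linarith [h r hr.le]

end Biconjugate

section Weak

instance {E : Type*} [AddCommGroup E] [Module ℝ E] [TopologicalSpace E] :
    LocallyConvexSpace ℝ (WeakSpace ℝ E) :=
  inferInstanceAs (LocallyConvexSpace ℝ (WeakBilin (topDualPairing ℝ E).flip))

theorem isCompact_weakSpace_of_surjective_inclusionInDoubleDual {𝕜 X : Type*} [RCLike 𝕜]
    [NormedAddCommGroup X] [NormedSpace 𝕜 X]
    (hX : Function.Surjective (NormedSpace.inclusionInDoubleDual 𝕜 X)) {s : Set (WeakSpace 𝕜 X)}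
    (hs : IsClosed s) (hb : Bornology.IsBounded (toWeakSpace 𝕜 X ⁻¹' s)) : IsCompact s := by
  rw [← hs.closure_eq]
  exact NormedSpace.isCompact_closure_of_isBounded 𝕜 X s hb fun Φ _ => hX Φ

variable {V : Type*} [NormedAddCommGroup V] [InnerProductSpace ℝ V]

theorem continuous_inner_weakSpace (y : V) :
    Continuous fun w : WeakSpace ℝ V => ⟪y, (toWeakSpace ℝ V).symm w⟫_ℝ :=
  WeakBilin.eval_continuous (topDualPairing ℝ V).flip (innerSL ℝ y)

theorem exists_continuousAffineMap_weakSpace_eq_inner_sub (y : V) (r : ℝ) :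
    ∃ A : WeakSpace ℝ V →ᴬ[ℝ] ℝ, ∀ z, A (toWeakSpace ℝ V z) = ⟪z, y⟫_ℝ - r := by
  let l : WeakSpace ℝ V →L[ℝ] ℝ :=
    ⟨(innerSL ℝ y).toLinearMap ∘ₗ (toWeakSpace ℝ V).symm.toLinearMap, continuous_inner_weakSpace y⟩
  refine ⟨l.toContinuousAffineMap - ContinuousAffineMap.const ℝ _ r, fun z => ?_⟩
  rw [real_inner_comm]
  rfl

variable [CompleteSpace V]

theorem exists_continuousAffineMap_eq_inner_sub (A : V →ᴬ[ℝ] ℝ) :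
    ∃ (y : V) (r : ℝ), ∀ z, A z = ⟪z, y⟫_ℝ - r := by
  refine ⟨(InnerProductSpace.toDual ℝ V).symm A.contLinear, -A 0, fun z => ?_⟩
  rw [real_inner_comm, InnerProductSpace.toDual_symm_apply, sub_neg_eq_add]
  exact congrFun A.decomp z

theorem legendre_legendre_eq_affineEnvelope (g : V → EReal) (x : V) :
    legendre (legendre g) x =
      affineEnvelope (fun w : WeakSpace ℝ V => g ((toWeakSpace ℝ V).symm w))
        (toWeakSpace ℝ V x) := by
  have hle_iff : ∀ t : ℝ, legendre (legendre g) x ≤ t ↔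
      affineEnvelope (fun w : WeakSpace ℝ V => g ((toWeakSpace ℝ V).symm w))
        (toWeakSpace ℝ V x) ≤ t := by
    refine fun t => legendre_legendre_le_coe_iff.trans
      (.trans ⟨fun h A hA => ?_, fun h y r hmin => ?_⟩ affineEnvelope_le_coe_iff.symm)
    · obtain ⟨y, r, hyr⟩ := exists_continuousAffineMap_eq_inner_sub
        (A.comp (toWeakSpaceCLM ℝ V).toContinuousAffineMap)
      exact (hyr x).trans_le (h y r fun z => hyr z ▸ hA (toWeakSpace ℝ V z))
    · obtain ⟨A, hA⟩ := exists_continuousAffineMap_weakSpace_eq_inner_sub y r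
      exact hA x ▸ h A fun w => hA ((toWeakSpace ℝ V).symm w) ▸ hmin _
  exact le_antisymm (EReal.le_of_forall_lt_iff_le.1 fun t ht => (hle_iff t).2 ht.le)
    (EReal.le_of_forall_lt_iff_le.1 fun t ht => (hle_iff t).1 ht.le)

theorem inclusionInDoubleDual_surjective :
    Function.Surjective (NormedSpace.inclusionInDoubleDual ℝ V) := by
  intro Φ
  let ψ : StrongDual ℝ V :=
    Φ.comp (isBoundedBilinearMap_inner (𝕜 := ℝ) (E := V)).toContinuousLinearMap
  refine ⟨(InnerProductSpace.toDual ℝ V).symm ψ, ContinuousLinearMap.ext fun φ => ?_⟩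
  obtain ⟨w, rfl⟩ := (InnerProductSpace.toDual ℝ V).surjective φ
  rw [NormedSpace.dual_def, InnerProductSpace.toDual_apply_apply, real_inner_comm,
    InnerProductSpace.toDual_symm_apply]
  rfl

end Weak

theorem statement11_general {V : Type*} [NormedAddCommGroup V] [InnerProductSpace ℝ V]
    [CompleteSpace V] (g : V → EReal) (hwlsc : LowerSemicontinuous (α := WeakSpace ℝ V) g) (x : V)
    (hbot : legendre (legendre g) x ≠ ⊥) {r : ℝ} (hr : legendre (legendre g) x < r)
    (hbdd : Bornology.IsBounded {z : V | legendre (legendre g) z ≤ r})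
    (hext : ¬ ∃ (ν : V) (a b t₀ : ℝ), ‖ν‖ = 1 ∧ 0 < t₀ ∧
      ∀ t ∈ Set.Ioo (-t₀) t₀,
        legendre (legendre g) (x + t • ν) = ((a * t + b : ℝ) : EReal)) :
    g x = legendre (legendre g) x := by
  simp only [legendre_legendre_eq_affineEnvelope] at hbot hr hbdd hext ⊢
  refine affineEnvelope_eq_of_not_affineAlong hwlsc hbot hr
    (isCompact_weakSpace_of_surjective_inclusionInDoubleDual inclusionInDoubleDual_surjective
      ((lowerSemicontinuous_affineEnvelope _).isClosed_preimage _) hbdd) fun ν hν hline => hext ?_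
  have hpos : 0 < ‖(toWeakSpace ℝ V).symm ν‖ := norm_pos_iff.2 hν
  obtain ⟨a, b, t₀, ht₀, hline⟩ := hline.smul (inv_pos.2 hpos)
  exact ⟨‖(toWeakSpace ℝ V).symm ν‖⁻¹ • (toWeakSpace ℝ V).symm ν, a, b, t₀,
    norm_smul_inv_norm hν, ht₀, hline⟩

/-- Let `g` be weakly l.s.c., not identically `+∞`, never `-∞`, with proper
coercive biconjugate `g**`. Then every extremal point `x` of `g**` (a point of the domain of
`g**` at which `g**` is not affine on any relatively open segment containing `x`) satisfies
`g(x) = g**(x)`. -/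
theorem statement11 {V : Type*} [NormedAddCommGroup V] [InnerProductSpace ℝ V]
    [CompleteSpace V] [TopologicalSpace.SeparableSpace V]
    (g : V → EReal)
    (hwlsc : LowerSemicontinuous (α := WeakSpace ℝ V) g)
    (hnebot : ∀ x, g x ≠ ⊥) (hproper : ∃ x, g x ≠ ⊤)
    (hss_nebot : ∀ x, legendre (legendre g) x ≠ ⊥)
    (hss_proper : ∃ x, legendre (legendre g) x ≠ ⊤)
    (hcoercive : ∀ r : ℝ, Bornology.IsBounded {x : V | legendre (legendre g) x ≤ (r : EReal)})
    (x : V)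
    (hdom : legendre (legendre g) x ≠ ⊤)
    (hext : ¬ ∃ (ν : V) (a b t₀ : ℝ), ‖ν‖ = 1 ∧ 0 < t₀ ∧
      ∀ t ∈ Set.Ioo (-t₀) t₀,
        legendre (legendre g) (x + t • ν) = ((a * t + b : ℝ) : EReal)) :
    g x = legendre (legendre g) x := by
  obtain ⟨r, hr, -⟩ := EReal.lt_iff_exists_real_btwn.1 (lt_top_iff_ne_top.2 hdom)
  exact statement11_general g hwlsc x (hss_nebot x) hr (hcoercive r) hext
end
end

section
/- Let f : V → [0,∞] be a function on a separable real Hilbert space V, let c : V → [0,∞] be a lower semicontinuous convex function with dom(f) ∩ dom(c) ≠ ∅, let d ∈ V, and let 0 < γ < 1. Then the function F(x) := S_γ²(f)(x) + ½‖x−d‖² + c(x) is strongly convex and supercoercive, and hence has a unique global minimizer x̂. Moreover, if S_γ²(f)(x̂) = f(x̂), then x̂ is a global minimizer of the function x ↦ f(x) + ½‖x−d‖² + c(x). -/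
open scoped InnerProductSpace RealInnerProductSpace ENNReal Topology
open Filter

noncomputable section

/-- The S-transform `S_γ(f)(y) = sup_x ( -f(x) - (γ/2)‖x-y‖² )` for
extended-real-valued functions on a real inner product space. -/
def SgammaE {V : Type*} [NormedAddCommGroup V] [InnerProductSpace ℝ V]
    (γ : ℝ) (f : V → EReal) (y : V) : EReal :=
  ⨆ x : V, (-(f x) - (((γ / 2) * ‖x - y‖ ^ 2 : ℝ) : EReal))

/-- The S-transform of a `[0,∞]`-valued function. -/
def Sgamma {V : Type*} [NormedAddCommGroup V] [InnerProductSpace ℝ V]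
    (γ : ℝ) (f : V → ℝ≥0∞) (y : V) : EReal :=
  SgammaE γ (fun x => (f x : EReal)) y

/-- The twice iterated S-transform `S_γ²(f) = S_γ(S_γ(f))`. -/
def Sgamma2 {V : Type*} [NormedAddCommGroup V] [InnerProductSpace ℝ V]
    (γ : ℝ) (f : V → ℝ≥0∞) : V → EReal :=
  SgammaE γ (Sgamma γ f)

/-- Convexity for extended-real-valued functions. -/
def EConvexOn {V : Type*} [NormedAddCommGroup V] [InnerProductSpace ℝ V]
    (h : V → EReal) : Prop :=
  ∀ x y : V, ∀ a b : ℝ, 0 ≤ a → 0 ≤ b → a + b = 1 →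
    h (a • x + b • y) ≤ (a : EReal) * h x + (b : EReal) * h y

/-- The objective `F(x) = S_γ²(f)(x) + ½‖x-d‖² + c(x)` of the convexified problem. -/
def convexifiedObjective {V : Type*} [NormedAddCommGroup V] [InnerProductSpace ℝ V]
    (γ : ℝ) (f c : V → ℝ≥0∞) (d : V) (x : V) : EReal :=
  Sgamma2 γ f x + ((1 / 2 * ‖x - d‖ ^ 2 : ℝ) : EReal) + (c x : EReal)

/-!
As a function of `y`, each `-f x - (γ/2) ‖x - y‖²` becomes affine after adding `(γ/2) ‖y‖²`, so
every S-transform is convex up to the quadratic `(γ/2) ‖·‖²`. The term `½ ‖x - d‖²` compensates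
this defect and leaves strong convexity with modulus `1 - γ`. For a strongly convex function the
parallelogram law bounds the diameter of the sublevel set `{F ≤ inf F + ε}` by a multiple of `√ε`;
these sets are closed by lower semicontinuity, so Cantor's intersection theorem yields exactly one
minimizer. Finally `S_γ²(f) ≤ f`, so a minimizer of `F` at which the two agree minimizes the
original objective.
-/

theorem exists_forall_le_of_dist_le {X α : Type*} [PseudoMetricSpace X] [CompleteSpace X]
    [LinearOrder α] {F : X → α} {level : ℕ → α} {δ : ℕ → ℝ}
    (hF : LowerSemicontinuous F) (hlevel : Antitone level) (hne : ∀ k, ∃ x, F x ≤ level k)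
    (hδ : Tendsto δ atTop (𝓝 0))
    (hdist : ∀ k x y, F x ≤ level k → F y ≤ level k → dist x y ≤ δ k) :
    ∃ x, ∀ k, F x ≤ level k := by
  have hδ_nonneg (k : ℕ) : 0 ≤ δ k := by
    obtain ⟨x, hx⟩ := hne k
    exact dist_nonneg.trans (hdist k x x hx hx)
  have hdiam (k : ℕ) : Metric.diam (F ⁻¹' Set.Iic (level k)) ≤ δ k :=
    Metric.diam_le_of_forall_dist_le (hδ_nonneg k) fun x hx y hy => hdist k x y hx hy
  have hinter (k : ℕ) : (⋂ j ≤ k, F ⁻¹' Set.Iic (level j)).Nonempty := by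
    obtain ⟨x, hx⟩ := hne k
    exact ⟨x, Set.mem_iInter₂.2 fun j hj => hx.trans (hlevel hj)⟩
  obtain ⟨x, hx⟩ := Metric.nonempty_iInter_of_nonempty_biInter
    (fun k => hF.isClosed_preimage (level k))
    (fun k => Metric.isBounded_iff.2 ⟨δ k, fun x hx y hy => hdist k x y hx hy⟩) hinter
    (squeeze_zero (fun _ => Metric.diam_nonneg) hdiam hδ)
  exact ⟨x, Set.mem_iInter.1 hx⟩

theorem lowerSemicontinuous_add_coe {X : Type*} [TopologicalSpace X] {g : X → EReal} {φ : X → ℝ}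
    (hg : LowerSemicontinuous g) (hφ : Continuous φ) :
    LowerSemicontinuous fun x => g x + (φ x : EReal) :=
  hg.add' (continuous_coe_real_ereal.comp hφ).lowerSemicontinuous fun _ =>
    EReal.continuousAt_add (.inr (EReal.coe_ne_bot _)) (.inr (EReal.coe_ne_top _))

/-- Strong convexity with modulus `m` for extended-real-valued functions: `h - (m / 2) ‖·‖²` is
convex. The modulus may have any sign, so that a negative `m` expresses weak convexity. -/
def EStrongConvexOn {V : Type*} [NormedAddCommGroup V] [InnerProductSpace ℝ V]
    (m : ℝ) (h : V → EReal) : Prop :=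
  EConvexOn fun x => h x - ((m / 2 * ‖x‖ ^ 2 : ℝ) : EReal)

section Convexity

variable {V : Type*} [NormedAddCommGroup V] [InnerProductSpace ℝ V]
  {g h F : V → EReal} {m n : ℝ}

theorem eConvexOn_const (C : EReal) : EConvexOn fun _ : V => C := by
  intro _ _ a b ha hb hab
  rw [← EReal.right_distrib_of_nonneg (EReal.coe_nonneg.2 ha) (EReal.coe_nonneg.2 hb),
    ← EReal.coe_add, hab, EReal.coe_one, one_mul]

theorem EConvexOn.of_convexOn {φ : V → ℝ} (hφ : ConvexOn ℝ Set.univ φ) :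
    EConvexOn fun x => (φ x : EReal) := by
  intro x y a b ha hb hab
  rw [← EReal.coe_mul, ← EReal.coe_mul, ← EReal.coe_add, EReal.coe_le_coe_iff]
  exact hφ.2 (Set.mem_univ x) (Set.mem_univ y) ha hb hab

theorem EConvexOn.add (hg : EConvexOn g) (hh : EConvexOn h) : EConvexOn fun x => g x + h x := by
  intro x y a b ha hb hab
  have distrib {t : ℝ} (ht : 0 ≤ t) (u v : EReal) : (t : EReal) * (u + v) = t * u + t * v :=
    EReal.left_distrib_of_nonneg_of_ne_top (EReal.coe_nonneg.2 ht) (EReal.coe_ne_top t) u v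
  rw [distrib ha, distrib hb, add_add_add_comm]
  exact add_le_add (hg x y a b ha hb hab) (hh x y a b ha hb hab)

theorem eStrongConvexOn_zero : EStrongConvexOn 0 h ↔ EConvexOn h := by
  simp [EStrongConvexOn]

theorem EStrongConvexOn.add (hg : EStrongConvexOn m g) (hh : EStrongConvexOn n h) :
    EStrongConvexOn (m + n) fun x => g x + h x := by
  have hsplit : (fun x => g x + h x - (((m + n) / 2 * ‖x‖ ^ 2 : ℝ) : EReal)) =
      fun x => (g x - ((m / 2 * ‖x‖ ^ 2 : ℝ) : EReal)) +
        (h x - ((n / 2 * ‖x‖ ^ 2 : ℝ) : EReal)) := by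
    funext x
    simp only [sub_eq_add_neg, ← EReal.coe_neg]
    rw [add_add_add_comm, ← EReal.coe_add]
    ring_nf
  rw [EStrongConvexOn, hsplit]
  exact EConvexOn.add hg hh

theorem EStrongConvexOn.iSup {ι : Sort*} {h : ι → V → EReal}
    (hh : ∀ i, EStrongConvexOn m (h i)) : EStrongConvexOn m fun x => ⨆ i, h i x := by
  intro x y a b ha hb hab
  refine EReal.sub_le_of_le_add (iSup_le fun i => ?_)
  rw [← EReal.sub_le_iff_le_add (.inl (EReal.coe_ne_bot _)) (.inl (EReal.coe_ne_top _))]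
  have mul_sub_mono {t : ℝ} (ht : 0 ≤ t) (w : V) (q : EReal) :
      (t : EReal) * (h i w - q) ≤ t * ((⨆ j, h j w) - q) :=
    mul_le_mul_of_nonneg_left (EReal.sub_le_sub (le_iSup (h · w) i) le_rfl) (EReal.coe_nonneg.2 ht)
  exact (hh i x y a b ha hb hab).trans (add_le_add (mul_sub_mono ha x _) (mul_sub_mono hb y _))

theorem eStrongConvexOn_norm_sub_sq (m : ℝ) (z : V) :
    EStrongConvexOn m fun x => ((m / 2 * ‖x - z‖ ^ 2 : ℝ) : EReal) := by
  have haffine : ConvexOn ℝ Set.univ fun x : V => (-m • innerₛₗ ℝ z) x + m / 2 * ‖z‖ ^ 2 :=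
    ((-m • innerₛₗ ℝ z).convexOn convex_univ).add_const _
  unfold EStrongConvexOn
  convert EConvexOn.of_convexOn haffine using 2 with x
  rw [← EReal.coe_sub, norm_sub_sq_real, real_inner_comm]
  simp only [LinearMap.smul_apply, innerₛₗ_apply_apply, smul_eq_mul]
  ring_nf

theorem EStrongConvexOn.norm_sub_sq_le (hF : EStrongConvexOn m F) {μ ν : ℝ}
    (hμ : ∀ z, (μ : EReal) ≤ F z) {x y : V} (hx : F x ≤ ν) (hy : F y ≤ ν) :
    m / 8 * ‖x - y‖ ^ 2 ≤ ν - μ := by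
  set p : V := (1 / 2 : ℝ) • x + (1 / 2 : ℝ) • y with hp
  have hmid : μ - m / 2 * ‖p‖ ^ 2 ≤
      1 / 2 * (ν - m / 2 * ‖x‖ ^ 2) + 1 / 2 * (ν - m / 2 * ‖y‖ ^ 2) := by
    rw [← EReal.coe_le_coe_iff]
    push_cast
    have half_nonneg : (0 : EReal) ≤ ((1 / 2 : ℝ) : EReal) := EReal.coe_nonneg.2 (by norm_num)
    calc (μ : EReal) - ((m / 2 * ‖p‖ ^ 2 : ℝ) : EReal)
        ≤ F p - ((m / 2 * ‖p‖ ^ 2 : ℝ) : EReal) := EReal.sub_le_sub (hμ p) le_rfl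
      _ ≤ _ := hF x y (1 / 2) (1 / 2) (by norm_num) (by norm_num) (by norm_num)
      _ ≤ _ := add_le_add
        (mul_le_mul_of_nonneg_left (EReal.sub_le_sub hx le_rfl) half_nonneg)
        (mul_le_mul_of_nonneg_left (EReal.sub_le_sub hy le_rfl) half_nonneg)
  have hpar : 4 * ‖p‖ ^ 2 + ‖x - y‖ ^ 2 = 2 * (‖x‖ ^ 2 + ‖y‖ ^ 2) := by
    have hnorm : ‖x + y‖ = 2 * ‖p‖ := by
      rw [hp, ← smul_add, norm_smul]
      norm_num [← mul_assoc]
    linarith [parallelogram_law_with_norm ℝ x y, congrArg (· ^ 2) hnorm]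
  linear_combination hmid + m / 8 * hpar

theorem EStrongConvexOn.dist_le (hF : EStrongConvexOn m F) (hm : 0 < m) {μ δ : ℝ} (hδ : 0 ≤ δ)
    (hμ : ∀ z, (μ : EReal) ≤ F z) {x y : V} (hx : F x ≤ ((μ + m / 8 * δ ^ 2 : ℝ) : EReal))
    (hy : F y ≤ ((μ + m / 8 * δ ^ 2 : ℝ) : EReal)) : dist x y ≤ δ := by
  have hsq : m / 8 * ‖x - y‖ ^ 2 ≤ m / 8 * δ ^ 2 := by
    simpa only [add_sub_cancel_left] using hF.norm_sub_sq_le hμ hx hy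
  rw [dist_eq_norm]
  exact le_of_sq_le_sq (le_of_mul_le_mul_left hsq (by positivity)) hδ

theorem EStrongConvexOn.exists_le_of_iInf_eq [CompleteSpace V] (hF : EStrongConvexOn m F)
    (hm : 0 < m) (hlsc : LowerSemicontinuous F) {μ : ℝ} (hμ : ⨅ x, F x = μ) : ∃ x, F x ≤ μ := by
  have hμ_le (z : V) : (μ : EReal) ≤ F z := hμ ▸ iInf_le F z
  let δ : ℕ → ℝ := fun k => 1 / ((k : ℝ) + 1)
  let level : ℕ → ℝ := fun k => μ + m / 8 * δ k ^ 2
  have hδ_pos (k : ℕ) : 0 < δ k := Nat.one_div_pos_of_nat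
  have hδ_lim : Tendsto δ atTop (𝓝 0) := tendsto_one_div_add_atTop_nhds_zero_nat
  have hlevel_anti : Antitone level := fun j k hjk => by
    have : δ k ≤ δ j := Nat.one_div_le_one_div hjk
    have := (hδ_pos k).le
    dsimp only [level]
    gcongr
  have hlevel_lim : Tendsto level atTop (𝓝 μ) := by
    simpa using ((hδ_lim.pow 2).const_mul (m / 8)).const_add μ
  have hnonempty (k : ℕ) : ∃ x, F x < level k := by
    rw [← iInf_lt_iff, hμ, EReal.coe_lt_coe_iff]
    have := hδ_pos k
    exact lt_add_of_pos_right μ (by positivity)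
  obtain ⟨x, hx⟩ := exists_forall_le_of_dist_le (level := fun k => (level k : EReal)) hlsc
    (EReal.coe_strictMono.monotone.comp_antitone hlevel_anti)
    (fun k => (hnonempty k).imp fun _ => le_of_lt)
    hδ_lim fun k _ _ hx hy => hF.dist_le hm (hδ_pos k).le hμ_le hx hy
  exact ⟨x, ge_of_tendsto' ((continuous_coe_real_ereal.tendsto μ).comp hlevel_lim) hx⟩

theorem EStrongConvexOn.existsUnique_forall_le [CompleteSpace V] (hF : EStrongConvexOn m F)
    (hm : 0 < m) (hlsc : LowerSemicontinuous F) (hbot : ⨅ x, F x ≠ ⊥) (htop : ⨅ x, F x ≠ ⊤) :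
    ∃! x, ∀ y, F x ≤ F y := by
  obtain ⟨μ, hμ⟩ : ∃ μ : ℝ, ⨅ x, F x = μ := ⟨_, (EReal.coe_toReal htop hbot).symm⟩
  have hμ_le (z : V) : (μ : EReal) ≤ F z := hμ ▸ iInf_le F z
  obtain ⟨x, hx⟩ := hF.exists_le_of_iInf_eq hm hlsc hμ
  refine ⟨x, fun y => hx.trans (hμ_le y), fun y hy => dist_le_zero.1 ?_⟩
  exact hF.dist_le hm le_rfl hμ_le (by simpa using (hy x).trans hx) (by simpa using hx)

end Convexity

section STransform

variable {V : Type*} [NormedAddCommGroup V] [InnerProductSpace ℝ V] {γ : ℝ}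

theorem eStrongConvexOn_SgammaE (γ : ℝ) (f : V → EReal) :
    EStrongConvexOn (-γ) (SgammaE γ f) := by
  refine EStrongConvexOn.iSup fun x => ?_
  convert (eStrongConvexOn_zero.2 (eConvexOn_const (-f x))).add
    (eStrongConvexOn_norm_sub_sq (-γ) x) using 2 with y
  · rw [zero_add]
  · rw [sub_eq_add_neg, ← EReal.coe_neg, norm_sub_rev]
    ring_nf

theorem lowerSemicontinuous_SgammaE (γ : ℝ) (f : V → EReal) :
    LowerSemicontinuous (SgammaE γ f) := by
  refine lowerSemicontinuous_iSup fun x => ?_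
  simp only [sub_eq_add_neg, ← EReal.coe_neg]
  exact lowerSemicontinuous_add_coe lowerSemicontinuous_const (by fun_prop)

theorem SgammaE_nonpos (hγ : 0 ≤ γ) {f : V → EReal} (hf : ∀ x, 0 ≤ f x) (y : V) :
    SgammaE γ f y ≤ 0 := by
  refine iSup_le fun x => EReal.sub_nonpos.2 ?_
  exact (EReal.neg_le_zero.2 (hf x)).trans (EReal.coe_nonneg.2 (by positivity))

theorem SgammaE_nonneg {f : V → EReal} (hf : ∀ x, f x ≤ 0) (y : V) : 0 ≤ SgammaE γ f y :=
  le_iSup_of_le y (by simpa using hf y)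

theorem SgammaE_SgammaE_le (f : V → EReal) (x : V) : SgammaE γ (SgammaE γ f) x ≤ f x := by
  refine iSup_le fun z => EReal.sub_le_of_le_add (EReal.neg_le.1 ?_)
  calc -(f x + ((γ / 2 * ‖z - x‖ ^ 2 : ℝ) : EReal))
      = -f x - ((γ / 2 * ‖x - z‖ ^ 2 : ℝ) : EReal) := by
        rw [EReal.neg_add (.inr (EReal.coe_ne_top _)) (.inr (EReal.coe_ne_bot _)), norm_sub_rev]
    _ ≤ SgammaE γ f z := le_iSup (fun w => -f w - ((γ / 2 * ‖w - z‖ ^ 2 : ℝ) : EReal)) x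

theorem Sgamma2_nonneg (hγ : 0 ≤ γ) (f : V → ℝ≥0∞) (x : V) : 0 ≤ Sgamma2 γ f x :=
  SgammaE_nonneg (SgammaE_nonpos hγ fun w => EReal.coe_ennreal_nonneg (f w)) x

theorem Sgamma2_le (f : V → ℝ≥0∞) (x : V) : Sgamma2 γ f x ≤ f x :=
  SgammaE_SgammaE_le (fun w => (f w : EReal)) x

end STransform

theorem eventually_mul_norm_le_half_norm_sub_sq {E : Type*} [SeminormedAddCommGroup E]
    (d : E) (r : ℝ) : ∀ᶠ x in Bornology.cobounded E, r * ‖x‖ ≤ 1 / 2 * ‖x - d‖ ^ 2 := by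
  have hnorm := tendsto_norm_cobounded_atTop (E := E)
  filter_upwards [hnorm.eventually_ge_atTop (2 * ‖d‖), hnorm.eventually_ge_atTop (8 * r)]
    with x hxd hxr
  have hhalf : ‖x‖ / 2 ≤ ‖x - d‖ := by linarith [norm_sub_norm_le x d]
  calc r * ‖x‖ ≤ ‖x‖ / 8 * ‖x‖ := by gcongr; linarith
    _ = 1 / 2 * (‖x‖ / 2) ^ 2 := by ring
    _ ≤ 1 / 2 * ‖x - d‖ ^ 2 := by gcongr

section Objective

variable {V : Type*} [NormedAddCommGroup V] [InnerProductSpace ℝ V]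
  {γ : ℝ} {f c : V → ℝ≥0∞} {d : V}

theorem eStrongConvexOn_convexifiedObjective (hc : EConvexOn fun x => (c x : EReal)) :
    EStrongConvexOn (1 - γ) (convexifiedObjective γ f c d) := by
  have hsum := ((eStrongConvexOn_SgammaE γ (Sgamma γ f)).add
    (eStrongConvexOn_norm_sub_sq 1 d)).add (eStrongConvexOn_zero.2 hc)
  rwa [neg_add_eq_sub, add_zero] at hsum

theorem half_norm_sub_sq_le_convexifiedObjective (hγ : 0 ≤ γ) (x : V) :
    ((1 / 2 * ‖x - d‖ ^ 2 : ℝ) : EReal) ≤ convexifiedObjective γ f c d x :=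
  le_add_of_le_of_nonneg (le_add_of_nonneg_left (Sgamma2_nonneg hγ f x))
    (EReal.coe_ennreal_nonneg (c x))

theorem convexifiedObjective_le (x : V) :
    convexifiedObjective γ f c d x ≤
      (f x : EReal) + ((1 / 2 * ‖x - d‖ ^ 2 : ℝ) : EReal) + (c x : EReal) := by
  unfold convexifiedObjective
  gcongr
  exact Sgamma2_le f x

theorem lowerSemicontinuous_convexifiedObjective (hγ : 0 ≤ γ) (hc : LowerSemicontinuous c) :
    LowerSemicontinuous (convexifiedObjective γ f c d) := by
  have hc' : LowerSemicontinuous fun x => (c x : EReal) :=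
    continuous_coe_ennreal_ereal.comp_lowerSemicontinuous hc fun _ _ h =>
      EReal.coe_ennreal_le_coe_ennreal_iff.2 h
  have hS_add_quad : LowerSemicontinuous fun x =>
      Sgamma2 γ f x + ((1 / 2 * ‖x - d‖ ^ 2 : ℝ) : EReal) :=
    lowerSemicontinuous_add_coe (lowerSemicontinuous_SgammaE γ (Sgamma γ f)) (by fun_prop)
  refine hS_add_quad.add' hc' fun x =>
    EReal.continuousAt_add (.inr (EReal.coe_ennreal_ne_bot _)) (.inl ?_)
  exact EReal.add_ne_bot_iff.2
    ⟨ne_bot_of_le_ne_bot EReal.zero_ne_bot (Sgamma2_nonneg hγ f x), EReal.coe_ne_bot _⟩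

theorem iInf_convexifiedObjective_ne_bot (hγ : 0 ≤ γ) :
    ⨅ x, convexifiedObjective γ f c d x ≠ ⊥ := by
  refine ne_bot_of_le_ne_bot EReal.zero_ne_bot (le_iInf fun x => ?_)
  exact (EReal.coe_nonneg.2 (by positivity)).trans (half_norm_sub_sq_le_convexifiedObjective hγ x)

theorem iInf_convexifiedObjective_ne_top (hdom : ∃ x, f x ≠ ∞ ∧ c x ≠ ∞) :
    ⨅ x, convexifiedObjective γ f c d x ≠ ⊤ := by
  obtain ⟨x, hfx, hcx⟩ := hdom
  refine ne_top_of_le_ne_top ?_ ((iInf_le _ x).trans (convexifiedObjective_le x))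
  refine EReal.add_ne_top (EReal.add_ne_top ?_ (EReal.coe_ne_top _)) ?_
  · rwa [ne_eq, EReal.coe_ennreal_eq_top_iff]
  · rwa [ne_eq, EReal.coe_ennreal_eq_top_iff]

end Objective

theorem statement13_general {V : Type*} [NormedAddCommGroup V] [InnerProductSpace ℝ V]
    [CompleteSpace V]
    (f c : V → ℝ≥0∞)
    (hc_lsc : LowerSemicontinuous c)
    (hc_conv : EConvexOn (fun x => (c x : EReal)))
    (hdom : ∃ x, f x ≠ ∞ ∧ c x ≠ ∞)
    (d : V) (γ : ℝ) (hγ0 : 0 ≤ γ) (hγ1 : γ < 1) :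
    (∃ β : ℝ, 0 < β ∧ EConvexOn (fun x =>
        convexifiedObjective γ f c d x - ((β / 2 * ‖x‖ ^ 2 : ℝ) : EReal))) ∧
    (∀ r : ℝ, ∀ᶠ x in Bornology.cobounded V,
        ((r * ‖x‖ : ℝ) : EReal) ≤ convexifiedObjective γ f c d x) ∧
    (∃! xhat : V, ∀ y : V, convexifiedObjective γ f c d xhat ≤ convexifiedObjective γ f c d y) ∧
    (∀ xhat : V,
      (∀ y : V, convexifiedObjective γ f c d xhat ≤ convexifiedObjective γ f c d y) →
      Sgamma2 γ f xhat = (f xhat : EReal) →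
      ∀ y : V,
        (f xhat : EReal) + ((1 / 2 * ‖xhat - d‖ ^ 2 : ℝ) : EReal) + (c xhat : EReal) ≤
          (f y : EReal) + ((1 / 2 * ‖y - d‖ ^ 2 : ℝ) : EReal) + (c y : EReal)) := by
  have hstrong : EStrongConvexOn (1 - γ) (convexifiedObjective γ f c d) :=
    eStrongConvexOn_convexifiedObjective hc_conv
  have hmodulus : 0 < 1 - γ := sub_pos.2 hγ1
  refine ⟨⟨1 - γ, hmodulus, hstrong⟩, fun r => ?supercoercive, ?minimizer, ?transfer⟩
  case supercoercive =>
    filter_upwards [eventually_mul_norm_le_half_norm_sub_sq d r] with x hx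
    exact (EReal.coe_le_coe_iff.2 hx).trans (half_norm_sub_sq_le_convexifiedObjective hγ0 x)
  case minimizer =>
    exact hstrong.existsUnique_forall_le hmodulus
      (lowerSemicontinuous_convexifiedObjective hγ0 hc_lsc)
      (iInf_convexifiedObjective_ne_bot hγ0) (iInf_convexifiedObjective_ne_top hdom)
  case transfer =>
    intro xhat hmin heq y
    rw [← heq]
    exact (hmin y).trans (convexifiedObjective_le y)

/-- For `0 < γ < 1`, `c` l.s.c. convex with `dom f ∩ dom c ≠ ∅`, the function
`F(x) = S_γ²(f)(x) + ½‖x-d‖² + c(x)` is strongly convex and supercoercive, hence has a unique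
global minimizer `x̂`; and if `S_γ²(f)(x̂) = f(x̂)` then `x̂` minimizes
`x ↦ f(x) + ½‖x-d‖² + c(x)`. -/
theorem statement13 {V : Type*} [NormedAddCommGroup V] [InnerProductSpace ℝ V]
    [CompleteSpace V] [TopologicalSpace.SeparableSpace V]
    (f c : V → ℝ≥0∞)
    (hc_lsc : LowerSemicontinuous c)
    (hc_conv : EConvexOn (fun x => (c x : EReal)))
    (hdom : ∃ x, f x ≠ ∞ ∧ c x ≠ ∞)
    (d : V) (γ : ℝ) (hγ0 : 0 < γ) (hγ1 : γ < 1) :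
    (∃ β : ℝ, 0 < β ∧ EConvexOn (fun x =>
        convexifiedObjective γ f c d x - ((β / 2 * ‖x‖ ^ 2 : ℝ) : EReal))) ∧
    (∀ r : ℝ, ∀ᶠ x in Bornology.cobounded V,
        ((r * ‖x‖ : ℝ) : EReal) ≤ convexifiedObjective γ f c d x) ∧
    (∃! xhat : V, ∀ y : V, convexifiedObjective γ f c d xhat ≤ convexifiedObjective γ f c d y) ∧
    (∀ xhat : V,
      (∀ y : V, convexifiedObjective γ f c d xhat ≤ convexifiedObjective γ f c d y) →
      Sgamma2 γ f xhat = (f xhat : EReal) →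
      ∀ y : V,
        (f xhat : EReal) + ((1 / 2 * ‖xhat - d‖ ^ 2 : ℝ) : EReal) + (c xhat : EReal) ≤
          (f y : EReal) + ((1 / 2 * ‖y - d‖ ^ 2 : ℝ) : EReal) + (c y : EReal)) := by
  exact statement13_general f c hc_lsc hc_conv hdom d γ hγ0.le hγ1
end
end
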